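/- Let f(x,y) = f₂x² + f₁xy + f₀y² be a binary quadratic form with integer coefficients which is primitive and irreducible as a polynomial over ℚ. If x, y, u, v are integers with f(x,y) = f(u,v), then there exists a 2×2 matrix T with rational entries and determinant equal to 1 such that f(t₁s + t₂t, t₃s + t₄t) = f(s,t) for all rational s, t (where T = [[t₁, t₂],[t₃, t₄]]) and T·(x,y)ᵀ = (u,v)ᵀ; that is, the rational automorphism relating the two representations can be chosen from the special (determinant one) automorphism group of f. -/

import Mathlib

/-!
Write `a, b, c` for the coefficients of the form `f` and let `ω` be formally the element with
`f(s, t) = a · Norm (s + ω t)`. Multiplication by `p + q (a ω)` acts on the coordinates `(s, t)` by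
the matrix `!![p, -q c; q a, p + q b]`; it multiplies `f` by the norm `p² + b p q + a c q²`, which
is also the determinant of the matrix. When `N = f(x, y) ≠ 0`, dividing `u + ω v` by `x + ω y`
gives the unique `p, q` for which this matrix sends `(x, y)` to `(u, v)`, and its norm is
`f(u, v) / f(x, y) = 1`. When `N = 0`, irreducibility makes `f` anisotropic
(`eq_zero_of_form_eq_zero`), so both vectors vanish and the identity matrix works.
-/

open MvPolynomial

/-- Two factors without constant term are non-units, so their product is not irreducible. -/
lemma not_irreducible_mul_of_eval_zero (g h : MvPolynomial (Fin 2) ℚ)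
    (hg : eval (0 : Fin 2 → ℚ) g = 0) (hh : eval (0 : Fin 2 → ℚ) h = 0) :
    ¬ Irreducible (g * h) := by
  intro hirr
  rcases hirr.isUnit_or_isUnit rfl with hu | hu
  · have := hu.map (eval (0 : Fin 2 → ℚ))
    rw [hg] at this
    exact not_isUnit_zero this
  · have := hu.map (eval (0 : Fin 2 → ℚ))
    rw [hh] at this
    exact not_isUnit_zero this

/-- An irreducible binary quadratic form over `ℚ` is anisotropic: a nontrivial zero `(x, y)` would
split off the linear factor vanishing on the line through `(x, y)`. -/
lemma eq_zero_of_form_eq_zero (a b c : ℚ)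
    (hirr : Irreducible
      (C a * X 0 ^ 2 + C b * X 0 * X 1 + C c * X 1 ^ 2 : MvPolynomial (Fin 2) ℚ))
    (x y : ℚ) (h : a * x ^ 2 + b * x * y + c * y ^ 2 = 0) : x = 0 ∧ y = 0 := by
  by_cases hy : y = 0
  · subst hy
    refine ⟨?_, rfl⟩
    by_contra hx
    have ha : a = 0 := by simpa [hx] using h
    subst ha
    refine not_irreducible_mul_of_eval_zero (X 1) (C b * X 0 + C c * X 1) (by simp) (by simp) ?_
    convert hirr using 1
    simp only [map_zero]
    ring
  · exfalso
    -- With `r = x / y`, the form is `(X - r Y) (a X + (a r + b) Y)`.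
    obtain ⟨r, rfl⟩ : ∃ r, x = r * y := ⟨x / y, by field_simp⟩
    have hc : c = -(a * r ^ 2 + b * r) := by
      have : (a * r ^ 2 + b * r + c) * y ^ 2 = 0 := by linear_combination h
      have := (mul_eq_zero.mp this).resolve_right (pow_ne_zero 2 hy)
      linear_combination this
    subst hc
    refine not_irreducible_mul_of_eval_zero (X 0 - C r * X 1) (C a * X 0 + C (a * r + b) * X 1)
      (by simp) (by simp) ?_
    convert hirr using 1
    simp only [map_add, map_mul, map_neg, map_pow]
    ring

/-- Any two integral representations of an integer by a primitive irreducible binary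
quadratic form are related by a rational automorphism of determinant one. -/
theorem essentially_represented_special (f₂ f₁ f₀ : ℤ)
    (hprim : Int.gcd (Int.gcd f₂ f₁) f₀ = 1)
    (hirr : Irreducible
      (C (f₂ : ℚ) * X 0 ^ 2 + C (f₁ : ℚ) * X 0 * X 1 + C (f₀ : ℚ) * X 1 ^ 2 :
        MvPolynomial (Fin 2) ℚ))
    (x y u v : ℤ)
    (hrep : f₂ * x ^ 2 + f₁ * x * y + f₀ * y ^ 2 = f₂ * u ^ 2 + f₁ * u * v + f₀ * v ^ 2) :
    ∃ t₁ t₂ t₃ t₄ : ℚ,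
      t₁ * t₄ - t₂ * t₃ = 1 ∧
      (∀ s t : ℚ,
        (f₂ : ℚ) * (t₁ * s + t₂ * t) ^ 2 + (f₁ : ℚ) * (t₁ * s + t₂ * t) * (t₃ * s + t₄ * t)
            + (f₀ : ℚ) * (t₃ * s + t₄ * t) ^ 2
          = (f₂ : ℚ) * s ^ 2 + (f₁ : ℚ) * s * t + (f₀ : ℚ) * t ^ 2) ∧
      t₁ * (x : ℚ) + t₂ * (y : ℚ) = (u : ℚ) ∧ t₃ * (x : ℚ) + t₄ * (y : ℚ) = (v : ℚ) := by
  have hq : (f₂ : ℚ) * x ^ 2 + f₁ * x * y + f₀ * y ^ 2 = f₂ * u ^ 2 + f₁ * u * v + f₀ * v ^ 2 := by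
    exact_mod_cast hrep
  generalize (f₂ : ℚ) = a at *
  generalize (f₁ : ℚ) = b at *
  generalize (f₀ : ℚ) = c at *
  generalize (x : ℚ) = x at *
  generalize (y : ℚ) = y at *
  generalize (u : ℚ) = u at *
  generalize (v : ℚ) = v at *
  by_cases hN : a * x ^ 2 + b * x * y + c * y ^ 2 = 0
  · obtain ⟨rfl, rfl⟩ := eq_zero_of_form_eq_zero a b c hirr x y hN
    obtain ⟨rfl, rfl⟩ := eq_zero_of_form_eq_zero a b c hirr u v (hq ▸ hN)
    exact ⟨1, 0, 0, 1, by norm_num, fun s t => by ring, by simp, by simp⟩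
  · obtain ⟨N, hNdef⟩ : ∃ N, N = a * x ^ 2 + b * x * y + c * y ^ 2 := ⟨_, rfl⟩
    rw [← hNdef] at hN
    -- `p, q` are the coordinates of `(u + ω v) / (x + ω y)` in the basis `1, a ω`.
    obtain ⟨p, hp⟩ : ∃ p, p * N = (a * x + b * y) * u + c * y * v := ⟨_, div_mul_cancel₀ _ hN⟩
    obtain ⟨q, hq'⟩ : ∃ q, q * N = x * v - y * u := ⟨_, div_mul_cancel₀ _ hN⟩
    have hu : p * x - q * c * y = u := by
      apply mul_right_cancel₀ hN
      linear_combination x * hp - c * y * hq' - u * hNdef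
    have hv : q * a * x + (p + q * b) * y = v := by
      apply mul_right_cancel₀ hN
      linear_combination y * hp + (a * x + b * y) * hq' - v * hNdef
    have hdet : p ^ 2 + b * p * q + a * c * q ^ 2 = 1 := by
      apply mul_right_cancel₀ hN
      rw [← hu, ← hv] at hq
      linear_combination (p ^ 2 + b * p * q + a * c * q ^ 2 - 1) * hNdef - hq
    refine ⟨p, -q * c, q * a, p + q * b, by linear_combination hdet, fun s t => ?_,
      by linear_combination hu, by linear_combination hv⟩
    linear_combination (a * s ^ 2 + b * s * t + c * t ^ 2) * hdet
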